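/- Let m and p be positive integers and set l = 4mp+1, t = 4mp−2p+1, p' = 2mp. Let s and k be integers with 0 ≤ s ≤ 2m−1 and sp+1 ≤ k ≤ (s+1)p. Then σ_{i_k} = (−1)^{s+1}; in particular σ_{i_k} = −1 on the first interval 1 ≤ k ≤ p, and the value alternates between −1 and 1 on the successive intervals of length p. -/

import Mathlib

open Finset

noncomputable section

/-- The q-Pochhammer symbol `(a; q)_n = ∏_{k=0}^{n-1} (1 - a q^k)`. -/
def qPoch (a q : ℂ) (n : ℕ) : ℂ := ∏ k ∈ Finset.range n, (1 - a * q ^ k)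

/-- The Gaussian binomial coefficient `[n; k]_q` as a polynomial in `q` over `ℤ`,
defined by the q-Pascal rule `[n; k] = [n-1; k-1] + q^k [n-1; k]`.  It is the
polynomial equal to `(q;q)_n / ((q;q)_{n-k} (q;q)_k)`. -/
def gaussPoly : ℕ → ℕ → Polynomial ℤ
  | _, 0 => 1
  | 0, _ + 1 => 0
  | n + 1, k + 1 => gaussPoly n k + Polynomial.X ^ (k + 1) * gaussPoly n (k + 1)

/-- The Gaussian binomial coefficient `[n; k]_q` evaluated at `q : ℂ`. -/
def gbin (q : ℂ) (n k : ℕ) : ℂ := Polynomial.aeval q (gaussPoly n k)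

/-- `σ_j = (-1)^⌊(2j-1)t/l⌋`. -/
def sigmaT (l t j : ℕ) : ℤ := (-1) ^ ((2 * j - 1) * t / l)

/-- `r(j)`: the unique integer with `r(j) ≡ (2j-1)t (mod 2l)` and `-l < r(j) < l`. -/
def rT (l t j : ℕ) : ℤ :=
  if (((2 * j - 1) * t % (2 * l) : ℕ) : ℤ) < (l : ℤ) then (((2 * j - 1) * t % (2 * l) : ℕ) : ℤ)
  else (((2 * j - 1) * t % (2 * l) : ℕ) : ℤ) - 2 * (l : ℤ)

/-- `r'(j) = (|r(j)| + 1)/2`. -/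
def rpT (l t j : ℕ) : ℕ := ((rT l t j).natAbs + 1) / 2

open Classical in
/-- `i_k`: the unique `j ∈ {1, …, (l-1)/2}` with `r'(j) = k`. -/
def iT (l t k : ℕ) : ℕ :=
  if h : ∃ j, j ∈ Finset.Icc 1 ((l - 1) / 2) ∧ rpT l t j = k then h.choose else 0

/-- `ε_{i,j,m}`: `1` if `j ≡ -i, -i-1 (mod 2m)`, `-1` if `j ≡ i, i-1 (mod 2m)`,
`0` otherwise (and `0` when `m ∣ i`, a case excluded in all uses). -/
def epsLO (m i j : ℕ) : ℤ :=
  if m ∣ i then 0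
  else if 2 * m ∣ (i + j) ∨ 2 * m ∣ (i + j + 1) then 1
  else if (2 * (m : ℤ)) ∣ ((j : ℤ) - (i : ℤ)) ∨ (2 * (m : ℤ)) ∣ ((j : ℤ) - (i : ℤ) + 1) then -1
  else 0

/-- `Δ_{i,j,m}`: `1` if `j ≡ -i, -i+1 (mod 2m)`, `-1` if `j ≡ i, i+1 (mod 2m)`,
`0` otherwise (and `0` when `m ∣ i`, a case excluded in all uses). -/
def deltaLO (m i j : ℕ) : ℤ :=
  if m ∣ i then 0
  else if 2 * m ∣ (i + j) ∨ 2 * m ∣ (i + j - 1) then 1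
  else if (2 * (m : ℤ)) ∣ ((j : ℤ) - (i : ℤ)) ∨ (2 * (m : ℤ)) ∣ ((j : ℤ) - (i : ℤ) - 1) then -1
  else 0

/-- `γ_{i,m} = 1` if `i ≡ 1, …, m-1 (mod 2m)` and `-1` otherwise. -/
def gamLO (m i : ℕ) : ℤ :=
  if 1 ≤ i % (2 * m) ∧ i % (2 * m) ≤ m - 1 then 1 else -1

/-- `β_{i,m} = 1` if `i ≡ 1, …, m-1 (mod 2m)`, `-1` if `i ≡ m+1, …, 2m-1 (mod 2m)`,
and `0` if `m ∣ i`. -/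
def betLO (m i : ℕ) : ℤ :=
  if 1 ≤ i % (2 * m) ∧ i % (2 * m) ≤ m - 1 then 1
  else if m + 1 ≤ i % (2 * m) ∧ i % (2 * m) ≤ 2 * m - 1 then -1
  else 0

/-- Extend a tuple `f : Fin P → Fin N` to `n : ℕ → ℕ` with `n i = f (i-1)` for
`1 ≤ i ≤ P` and `n i = 0` otherwise (in particular `n 0 = 0`). -/
def extTup (P N : ℕ) (f : Fin P → Fin N) : ℕ → ℕ :=
  fun i => if h : 1 ≤ i ∧ i ≤ P then (f ⟨i - 1, by omega⟩ : ℕ) else 0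

/-- Takata's exponent `a(n)` (an integer; every integer division below is exact). -/
def aT (l t : ℕ) (n : ℕ → ℕ) : ℤ :=
  -(∑ j ∈ Icc 1 ((l - 1) / 2), (∑ k ∈ Icc (rpT l t j) ((l - 1) / 2),
      (sigmaT l t (iT l t k) + sigmaT l t (iT l t ((l - 1) / 2 + 1 - k))) / 2) *
      ((n j : ℤ) - (n (j - 1) : ℤ)))
  - ∑ j ∈ Icc 1 ((l - 1) / 2 - 1), ((sigmaT l t (j + 1) + sigmaT l t ((l - 1) / 2 + 1 - j)) / 2) * (n j : ℤ)
  - ((sigmaT l t ((l - 1) / 2) + 1) / 2) * (n ((l - 1) / 2) : ℤ)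
  - ∑ j ∈ Icc 1 ((l - 1) / 2), sigmaT l t j

/-- Takata's exponent `b₁(n)` (an integer; every integer division below is exact
whenever the factor it multiplies is nonzero). -/
def b1T (l t : ℕ) (n : ℕ → ℕ) : ℤ :=
  -aT l t n
  + ∑ k ∈ Icc 1 ((l - t) / 2), ((1 - sigmaT l t (iT l t k)) / 2) * (n (iT l t k - 1) : ℤ)
  - ∑ k ∈ Icc ((l - t) / 2 + 1) ((l - 1) / 2), (n (iT l t k - 1) : ℤ)
  + ∑ k ∈ Icc ((l - t) / 2 + 1) ((l - 1) / 2), ((1 + sigmaT l t (iT l t k)) / 2) * (n (iT l t k) : ℤ)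
  - (1 + sigmaT l t ((l - 1) / 2)) * (n ((l - 1) / 2) : ℤ)
  + ∑ j ∈ Icc 1 ((l - 1) / 2 - 1), ((sigmaT l t (j + 1) - sigmaT l t j) / 2) * (n j : ℤ)
  - ∑ k ∈ Icc 1 ((l - 1) / 2 - 1), ∑ k' ∈ Icc (k + 1) ((l - 1) / 2),
      ((1 + Int.sign ((iT l t k : ℤ) - (iT l t k' : ℤ))) / 2) *
        ((sigmaT l t (iT l t k) - sigmaT l t (iT l t k')) / 2) *
        ((n (iT l t k) : ℤ) - (n (iT l t k - 1) : ℤ)) *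
        ((n (iT l t k') : ℤ) - (n (iT l t k' - 1) : ℤ))
  + ∑ j ∈ Icc 1 ((l - 1) / 2), sigmaT l t j *
      (∑ k ∈ Icc 1 (rpT l t j), ((n (iT l t k) : ℤ) - (n (iT l t k - 1) : ℤ))) * (n (j - 1) : ℤ)

/-- Takata's exponent `b₂(n)`. -/
def b2T (l t : ℕ) (n : ℕ → ℕ) : ℤ :=
  if l < 2 * t then
    ∑ k ∈ Icc ((l - t) / 2 + 1) ((t - 1) / 2),
      ((1 + sigmaT l t (iT l t k)) / 2) * (n (iT l t k - 1) : ℤ)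
  else
    -∑ k ∈ Icc ((t + 1) / 2 + 1) ((l - t) / 2),
      ((1 + sigmaT l t (iT l t k)) / 2) * (n (iT l t k - 1) : ℤ)

/-- Takata's `κ(p')`. -/
def kapT (l t N : ℕ) (n : ℕ → ℕ) : ℤ :=
  if sigmaT l t ((l - 1) / 2) = -1 then -(N : ℤ) * (n ((l - 1) / 2) : ℤ) else 0

/-- Takata's `τ(j)`. -/
def tauT (l t : ℕ) (q : ℂ) (n : ℕ → ℕ) (j : ℕ) : ℂ :=
  if sigmaT l t j = -1 then (-1 : ℂ) ^ (n j - n (j - 1))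
  else q ^ ((((n j : ℤ) - (n (j - 1) : ℤ)) * (((n j : ℤ) - (n (j - 1) : ℤ)) + 1)) / 2)

/-- Takata's `X(n)`. -/
def XT (l t N : ℕ) (q : ℂ) (n : ℕ → ℕ) : ℂ :=
  (-1 : ℂ) ^ (n ((l - 1) / 2)) * q ^ kapT l t N n *
    (qPoch q q (N - 1) * qPoch q q (n ((l - 1) / 2)) / qPoch q q (N - n ((l - 1) / 2) - 1)) *
    ∏ j ∈ Icc 1 ((l - 1) / 2), tauT l t q n j / qPoch q q (n j - n (j - 1))

/-- `r(j)` differs from `(2j-1)t` by a multiple of `2l`, lies in `[-l, l)`, and `σ_j` is its sign. -/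
lemma rT_spec {l : ℕ} (t j : ℕ) (hl : 0 < l) :
    (∃ c : ℤ, (((2 * j - 1) * t : ℕ) : ℤ) = 2 * l * c + rT l t j) ∧
      -(l : ℤ) ≤ rT l t j ∧ rT l t j < l ∧
      (0 ≤ rT l t j → sigmaT l t j = 1) ∧ (rT l t j < 0 → sigmaT l t j = -1) := by
  unfold rT sigmaT
  generalize (2 * j - 1) * t = a
  have hdiv := Nat.mod_add_div a (2 * l)
  have hlt : a % (2 * l) < 2 * l := Nat.mod_lt _ (by omega)
  generalize a % (2 * l) = r at hdiv hlt ⊢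
  generalize a / (2 * l) = c at hdiv
  subst hdiv
  have hq : (r + 2 * l * c) / l = r / l + 2 * c := by
    rw [show r + 2 * l * c = r + l * (2 * c) by ring, Nat.add_mul_div_left _ _ hl]
  rw [hq, pow_add, pow_mul]
  split_ifs with h
  · refine ⟨⟨c, by push_cast; ring⟩, by omega, by omega, fun _ => ?_, fun _ => by omega⟩
    rw [Nat.div_eq_of_lt (by omega)]
    norm_num
  · refine ⟨⟨c + 1, by push_cast; ring⟩, by omega, by omega, fun _ => by omega, fun _ => ?_⟩
    rw [Nat.div_eq_of_lt_le (k := 1) (by omega) (by omega)]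
    norm_num

/-- An integer congruent to `(2j-1)t` modulo `2l` and lying strictly between `-l` and `l`
is `r(j)`. -/
lemma rT_eq_of_eq_add {l t j : ℕ} {r c : ℤ} (h : (((2 * j - 1) * t : ℕ) : ℤ) = 2 * l * c + r)
    (hlo : -(l : ℤ) < r) (hhi : r < l) : rT l t j = r := by
  obtain ⟨⟨c', hc'⟩, h1, h2, -, -⟩ := rT_spec t j (l := l) (by omega)
  have hmul : rT l t j - r = 2 * l * (c - c') := by linarith
  have : rT l t j - r = 0 :=
    Int.eq_zero_of_abs_lt_dvd (m := 2 * (l : ℤ)) ⟨_, hmul⟩ (by rw [abs_lt]; constructor <;> omega)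
  omega

/-- For odd `t`, `r(j)` is odd. -/
lemma odd_rT {l t j : ℕ} (hl : 0 < l) (ht : Odd t) (hj : 1 ≤ j) : Odd (rT l t j) := by
  obtain ⟨⟨c, hc⟩, -⟩ := rT_spec t j hl
  have hodd : Odd ((2 * j - 1) * t) := Nat.odd_mul.2 ⟨⟨j - 1, by omega⟩, ht⟩
  rw [← Int.odd_coe_nat, hc, mul_assoc, Int.odd_add] at hodd
  by_contra h
  exact Int.not_odd_iff_even.2 (even_two_mul _) (hodd.2 (Int.not_odd_iff_even.1 h))

/-- If the value `k` is attained by `r'` on `{1, …, (l-1)/2}`, then `i_k` lies in that set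
and `r'(i_k) = k`. -/
lemma iT_spec {l t k : ℕ} (h : ∃ j, j ∈ Finset.Icc 1 ((l - 1) / 2) ∧ rpT l t j = k) :
    iT l t k ∈ Finset.Icc 1 ((l - 1) / 2) ∧ rpT l t (iT l t k) = k := by
  unfold iT
  rw [dif_pos h]
  exact h.choose_spec

section

variable {m p s k : ℕ}

/-- For `k` in the `s`-th interval of length `p`, `2m(2k-1)` lies strictly between `sl` and
`(s+1)l`, where `l = 4mp+1`. -/
lemma two_mul_mul_bounds (hs : s + 1 ≤ 2 * m) (hk1 : s * p + 1 ≤ k)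
    (hk2 : k ≤ (s + 1) * p) :
    (s : ℤ) * (4 * m * p + 1) < 2 * m * (2 * k - 1) ∧
      2 * m * (2 * k - 1) < ((s : ℤ) + 1) * (4 * m * p + 1) := by
  zify at hs hk1 hk2
  constructor <;> nlinarith

/-- If `r'(j) = k` with `k` in the `s`-th interval of length `p`, then `σ_j = (-1)^(s+1)`. -/
lemma sigmaT_eq_of_rpT_eq {j t : ℕ} (ht : (t : ℤ) = 4 * m * p - 2 * p + 1)
    (hs : s + 1 ≤ 2 * m) (hk1 : s * p + 1 ≤ k) (hk2 : k ≤ (s + 1) * p)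
    (hj1 : 1 ≤ j) (hj2 : j ≤ 2 * m * p) (hj : rpT (4 * m * p + 1) t j = k) :
    sigmaT (4 * m * p + 1) t j = (-1 : ℤ) ^ (s + 1) := by
  have htodd : Odd t := by
    rw [← Int.odd_coe_nat, ht]
    exact ⟨2 * m * p - p, by ring⟩
  obtain ⟨⟨c, hc⟩, -, -, hpos, hneg⟩ := rT_spec t j (l := 4 * m * p + 1) (by omega)
  have hr := odd_rT (l := 4 * m * p + 1) (by omega) htodd hj1
  unfold rpT at hj
  obtain ⟨hlo, hhi⟩ := two_mul_mul_bounds hs hk1 hk2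
  generalize rT (4 * m * p + 1) t j = r at *
  have habs : r = 2 * k - 1 ∨ r = -(2 * k - 1) := by
    obtain ⟨u, rfl⟩ := hr
    omega
  push_cast [Nat.cast_sub (show 1 ≤ 2 * j by omega), ht] at hc
  have hj2' : (j : ℤ) ≤ 2 * m * p := by exact_mod_cast hj2
  have hj1' : (1 : ℤ) ≤ j := by exact_mod_cast hj1
  have hmod : (2 * j - 1 : ℤ) - 2 * m * r =
      (4 * m * p + 1) * (4 * m * c - (2 * m - 1) * (2 * j - 1)) := by
    linear_combination 2 * (m : ℤ) * hc
  generalize (4 * m * c - (2 * m - 1) * (2 * j - 1) : ℤ) = d at hmod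
  have hlpos : (0 : ℤ) < 4 * m * p + 1 := by positivity
  rcases habs with rfl | rfl
  · have hd : d + s = 0 := by
      have h1 : (-1 : ℤ) < d + s := by
        by_contra! h
        nlinarith
      have h2 : d + s < (1 : ℤ) := by
        by_contra! h
        nlinarith
      omega
    have hsodd : Odd s := by
      rw [← Nat.not_even_iff_odd]
      rintro ⟨u, rfl⟩
      obtain rfl : d = -(2 * u) := by push_cast at hd; linarith
      have : 2 * ((j : ℤ) - m * (2 * k - 1) + (4 * m * p + 1) * u) = 1 := by
        linear_combination hmod
      omega
    rw [hpos (by nlinarith), hsodd.add_one.neg_one_pow]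
  · have hd : d = s + 1 := by
      have h1 : (s : ℤ) < d := by
        by_contra! h
        nlinarith
      have h2 : d < (s : ℤ) + 2 := by
        by_contra! h
        nlinarith
      omega
    have hseven : Even s := by
      rw [← Nat.not_odd_iff_even]
      rintro ⟨u, rfl⟩
      obtain rfl : d = 2 * (u + 1) := by push_cast at hd; linarith
      have : 2 * ((j : ℤ) + m * (2 * k - 1) - (4 * m * p + 1) * (u + 1)) = 1 := by
        linear_combination hmod
      omega
    rw [hneg (by omega), hseven.add_one.neg_one_pow]

/-- Every `k` in the `s`-th interval of length `p` is a value of `r'` on `{1, …, 2mp}`. -/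
lemma exists_rpT_eq {t : ℕ} (ht : (t : ℤ) = 4 * m * p - 2 * p + 1)
    (hs : s + 1 ≤ 2 * m) (hk1 : s * p + 1 ≤ k) (hk2 : k ≤ (s + 1) * p) :
    ∃ j, 1 ≤ j ∧ j ≤ 2 * m * p ∧ rpT (4 * m * p + 1) t j = k := by
  obtain ⟨hlo, hhi⟩ := two_mul_mul_bounds hs hk1 hk2
  have hkle : (k : ℤ) ≤ 2 * m * p := by
    exact_mod_cast hk2.trans (Nat.mul_le_mul_right p hs)
  have hkpos : 1 ≤ k := by omega
  suffices h : ∃ J r c : ℤ, 1 ≤ J ∧ J ≤ 2 * m * p ∧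
      (2 * J - 1) * t = 2 * (4 * m * p + 1) * c + r ∧ (r = 2 * k - 1 ∨ r = -(2 * k - 1)) by
    obtain ⟨J, r, c, hJ1, hJ2, hc, hr⟩ := h
    lift J to ℕ using by omega
    refine ⟨J, by omega, by exact_mod_cast hJ2, ?_⟩
    have hrT : rT (4 * m * p + 1) t J = r := by
      refine rT_eq_of_eq_add (c := c) ?_ ?_ ?_
      · push_cast [Nat.cast_sub (show 1 ≤ 2 * J by omega)]
        exact hc
      · push_cast
        rcases hr with rfl | rfl <;> linarith
      · push_cast
        rcases hr with rfl | rfl <;> linarith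
    unfold rpT
    omega
  rcases Nat.even_or_odd' s with ⟨u, rfl | rfl⟩
  · push_cast at hlo hhi
    have hJ : (2 : ℤ) * ((2 * u + 1) * (2 * m * p) + u + 1 - m * (2 * k - 1)) - 1 =
        (2 * u + 1) * (4 * m * p + 1) - 2 * m * (2 * k - 1) := by ring
    refine ⟨(2 * u + 1) * (2 * m * p) + u + 1 - m * (2 * k - 1), -(2 * k - 1),
      (2 * u + 1) * (2 * m * p) + u - m * (2 * k - 1) + k - p * (2 * u + 1), ?_, ?_, ?_, Or.inr rfl⟩
    · linarith
    · linarith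
    · rw [ht]
      ring
  · push_cast at hlo hhi
    have hJ : (2 : ℤ) * (m * (2 * k - 1) - (2 * u + 1) * (2 * m * p) - u) - 1 =
        2 * m * (2 * k - 1) - (2 * u + 1) * (4 * m * p + 1) := by ring
    refine ⟨m * (2 * k - 1) - (2 * u + 1) * (2 * m * p) - u, 2 * k - 1,
      m * (2 * k - 1) - (2 * u + 1) * (2 * m * p) - u - k + p * (2 * u + 1), ?_, ?_, ?_, Or.inl rfl⟩
    · linarith
    · linarith
    · rw [ht]
      ring

end

/-- Lemma 2.4(iii): for `l = 4mp+1`, `t = 4mp-2p+1`, `σ_(i_k)` alternates between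
`-1` and `1` on successive intervals of length `p`, starting with `-1`. -/
theorem sigma_iT_formula_neg_pos
    (m p s k : ℕ) (hm : 0 < m) (hp : 0 < p)
    (hs : s ≤ 2 * m - 1) (hk1 : s * p + 1 ≤ k) (hk2 : k ≤ (s + 1) * p) :
    sigmaT (4 * m * p + 1) (4 * m * p - 2 * p + 1) (iT (4 * m * p + 1) (4 * m * p - 2 * p + 1) k) = (-1 : ℤ) ^ (s + 1) := by
  have ht : ((4 * m * p - 2 * p + 1 : ℕ) : ℤ) = 4 * m * p - 2 * p + 1 := by
    have : 2 * p ≤ 4 * m * p := Nat.mul_le_mul_right p (by omega)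
    push_cast [Nat.cast_sub this]
    ring
  have hl : (4 * m * p + 1 - 1) / 2 = 2 * m * p := by
    rw [Nat.add_sub_cancel, show 4 * m * p = 2 * (2 * m * p) by ring]
    exact Nat.mul_div_cancel_left _ two_pos
  have hs' : s + 1 ≤ 2 * m := by omega
  obtain ⟨j, hj1, hj2, hj⟩ := exists_rpT_eq ht hs' hk1 hk2
  obtain ⟨hmem, hrp⟩ := iT_spec ⟨j, Finset.mem_Icc.2 ⟨hj1, by rwa [hl]⟩, hj⟩
  rw [hl, Finset.mem_Icc] at hmem
  exact sigmaT_eq_of_rpT_eq ht hs' hk1 hk2 hmem.1 hmem.2 hrp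

end
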